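/- For every κ > 0, the supremum over (η₁, η₂) ∈ ℝ² of the function w(η₁, η₂) = κ⁴ (24κ² + η₁² + η₂² + (η₁+η₂)²) / (2(2π)^{1/2} (η₁²+4κ²)(η₂²+4κ²)((η₁+η₂)²+4κ²)) equals (3/16)(2π)^{-1/2}, and it is attained at η₁ = η₂ = 0. In particular ‖w‖_{L^∞(ℝ²)} = (3/16)(2π)^{-1/2} independently of κ. -/

import Mathlib

/-- The Fourier multiplier weight arising after evaluating the `η₃`-integral in the trace
of the cubic term of the tidal `H_κ` flow. -/
noncomputable def w6 (κ η₁ η₂ : ℝ) : ℝ :=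
  κ ^ 4 * (24 * κ ^ 2 + η₁ ^ 2 + η₂ ^ 2 + (η₁ + η₂) ^ 2) /
    (2 * Real.sqrt (2 * Real.pi) * (η₁ ^ 2 + 4 * κ ^ 2) * (η₂ ^ 2 + 4 * κ ^ 2) *
      ((η₁ + η₂) ^ 2 + 4 * κ ^ 2))

/-!
With `A = η₁ ^ 2 + 4 * κ ^ 2`, `B = η₂ ^ 2 + 4 * κ ^ 2` and `C = (η₁ + η₂) ^ 2 + 4 * κ ^ 2`, the
weight is a constant multiple of `(12 * κ ^ 2 + A + B + C) / (A * B * C)`. Expanding the quotient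
into partial fractions shows that it decreases in each of `A`, `B`, `C`, and all three are smallest
at the origin.
-/

theorem add_add_add_div_mul_mul {K : Type*} [Field K] {x y z : K}
    (hx : x ≠ 0) (hy : y ≠ 0) (hz : z ≠ 0) (s : K) :
    (s + x + y + z) / (x * y * z) =
      s / (x * y * z) + 1 / (y * z) + 1 / (x * z) + 1 / (x * y) := by
  field_simp

theorem add_add_add_div_mul_mul_le {K : Type*} [Field K] [LinearOrder K] [IsStrictOrderedRing K]
    {s a b c a' b' c' : K} (hs : 0 ≤ s) (ha : 0 < a) (hb : 0 < b) (hc : 0 < c)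
    (haa' : a ≤ a') (hbb' : b ≤ b') (hcc' : c ≤ c') :
    (s + a' + b' + c') / (a' * b' * c') ≤ (s + a + b + c) / (a * b * c) := by
  have ha' : 0 < a' := ha.trans_le haa'
  have hb' : 0 < b' := hb.trans_le hbb'
  have hc' : 0 < c' := hc.trans_le hcc'
  rw [add_add_add_div_mul_mul ha'.ne' hb'.ne' hc'.ne', add_add_add_div_mul_mul ha.ne' hb.ne' hc.ne']
  gcongr

theorem w6_eq_mul_div (κ η₁ η₂ : ℝ) :
    w6 κ η₁ η₂ = κ ^ 4 / (2 * √(2 * Real.pi)) *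
      ((12 * κ ^ 2 + (η₁ ^ 2 + 4 * κ ^ 2) + (η₂ ^ 2 + 4 * κ ^ 2) + ((η₁ + η₂) ^ 2 + 4 * κ ^ 2)) /
        ((η₁ ^ 2 + 4 * κ ^ 2) * (η₂ ^ 2 + 4 * κ ^ 2) * ((η₁ + η₂) ^ 2 + 4 * κ ^ 2))) := by
  rw [w6, div_mul_div_comm]
  congr 1 <;> ring

theorem w6_zero_zero {κ : ℝ} (hκ : κ ≠ 0) : w6 κ 0 0 = 3 / 16 * (√(2 * Real.pi))⁻¹ := by
  rw [w6]
  field_simp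
  ring

theorem w6_le_w6_zero_zero {κ : ℝ} (hκ : κ ≠ 0) (η₁ η₂ : ℝ) : w6 κ η₁ η₂ ≤ w6 κ 0 0 := by
  have factor_zero_pos : 0 < 0 ^ 2 + 4 * κ ^ 2 := by positivity
  have factor_zero_le (η : ℝ) : 0 ^ 2 + 4 * κ ^ 2 ≤ η ^ 2 + 4 * κ ^ 2 := by
    simpa using sq_nonneg η
  rw [w6_eq_mul_div, w6_eq_mul_div, add_zero]
  gcongr ?_ * ?_
  exact add_add_add_div_mul_mul_le (by positivity) factor_zero_pos factor_zero_pos factor_zero_pos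
    (factor_zero_le η₁) (factor_zero_le η₂) (factor_zero_le (η₁ + η₂))

/-- For every `κ > 0`, the supremum of `w6 κ` over `ℝ²` equals
`(3/16)(2π)^{-1/2}` and is attained at the origin. -/
theorem stmt6 (κ : ℝ) (hκ : 0 < κ) :
    IsGreatest (Set.range fun p : ℝ × ℝ => w6 κ p.1 p.2)
      ((3 / 16) * (Real.sqrt (2 * Real.pi))⁻¹) ∧
    w6 κ 0 0 = (3 / 16) * (Real.sqrt (2 * Real.pi))⁻¹ := by
  have value_zero := w6_zero_zero hκ.ne'
  refine ⟨⟨⟨(0, 0), value_zero⟩, ?_⟩, value_zero⟩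
  rintro _ ⟨⟨η₁, η₂⟩, rfl⟩
  exact (w6_le_w6_zero_zero hκ.ne' η₁ η₂).trans_eq value_zero
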